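/- Let k > ℓ ≥ 1 be integers, and let G = K_{(k−ℓ,1,…,1)} be the complete (ℓ+1)-partite graph on k vertices with one part of size k−ℓ and ℓ parts of size 1. With c = ℓ+1 colors and any N ≥ ℓ+1, one has θ* ≥ (ℓ!/k^ℓ) · ((k−ℓ)/k)^{k−ℓ} ≥ (ℓ!/e^ℓ) · (1/k^ℓ), where e is the base of the natural logarithm. -/

import Mathlib

open Classical

/-- A proper coloring of the multi-hypergraph `(U, A)`: every edge `S ∈ A` contains
two distinct vertices receiving different colors. -/
def ProperColoring {U κ : Type*} (A : Multiset (Finset U)) (h : U → κ) : Prop :=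
  ∀ S ∈ A, ∃ u ∈ S, ∃ v ∈ S, u ≠ v ∧ h u ≠ h v

/-- For an `N`-coloring `h` of the multi-hypergraph `(U, A)`, the sum over all proper
`c`-colorings `g` of the homomorphic image `h(G)` (a map on the image `h(U) ⊆ [N]`
giving two differently-colored distinct vertices in every image edge `h(S)`)
of `∏_{v ∈ h(U)} p_{g v}`. -/
noncomputable def imageColoringSum {U : Type*} [Fintype U] (A : Multiset (Finset U))
    {N c : ℕ} (p : Fin c → ℝ) (h : U → Fin N) : ℝ :=
  ∑ g : {v : Fin N // v ∈ Finset.image h Finset.univ} → Fin c,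
    if ∀ S ∈ A, ∃ u ∈ S, ∃ v ∈ S,
        g ⟨h u, Finset.mem_image_of_mem h (Finset.mem_univ u)⟩ ≠
        g ⟨h v, Finset.mem_image_of_mem h (Finset.mem_univ v)⟩
    then ∏ v : {v : Fin N // v ∈ Finset.image h Finset.univ}, p (g v)
    else 0

/-- `θ(p)`: the minimum, over proper `N`-colorings `h` of `(U, A)`, of the sum over
proper `c`-colorings `g` of the homomorphic image `h(G)` of `∏_{v ∈ h(U)} p_{g v}`. -/
noncomputable def theta {U : Type*} [Fintype U] (A : Multiset (Finset U))
    (N : ℕ) {c : ℕ} (p : Fin c → ℝ) : ℝ :=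
  sInf {t : ℝ | ∃ h : U → Fin N, ProperColoring A h ∧ imageColoringSum A p h = t}

/-- `P(G, c)`: the number of proper `c`-colorings of the multi-hypergraph `(U, A)`. -/
noncomputable def numProperColorings (U : Type*) [Fintype U] (A : Multiset (Finset U))
    (c : ℕ) : ℕ :=
  Fintype.card {h : U → Fin c // ProperColoring A h}

/-- `θ* = sup` of `θ(p)` over probability vectors `p` with `c` entries. -/
noncomputable def thetaStar {U : Type*} [Fintype U] (A : Multiset (Finset U))
    (N c : ℕ) : ℝ :=
  sSup {t : ℝ | ∃ p : Fin c → ℝ, (∀ i, 0 ≤ p i) ∧ ∑ i, p i = 1 ∧ theta A N p = t}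

/-- The edge multiset of the complete multipartite graph whose parts are the fibers
of `part : U → Fin ℓ`: all pairs `{u, v}` with `u, v` in different parts. -/
noncomputable def multipartiteEdges {U : Type*} [Fintype U] [DecidableEq U] {ℓ : ℕ}
    (part : U → Fin ℓ) : Multiset (Finset U) :=
  (Finset.image (fun e : U × U => ({e.1, e.2} : Finset U))
    ((Finset.univ ×ˢ Finset.univ).filter (fun e : U × U => part e.1 ≠ part e.2))).val

theorem aux_mem {U : Type*} [Fintype U] [DecidableEq U] {ℓ : ℕ} (part : U → Fin ℓ)
    (S : Finset U) : S ∈ multipartiteEdges part ↔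
      ∃ a b : U, part a ≠ part b ∧ ({a, b} : Finset U) = S := by
  unfold multipartiteEdges
  rw [Finset.mem_val]
  simp

theorem aux_proper {U κ : Type*} [Fintype U] [DecidableEq U] {ℓ : ℕ} (part : U → Fin ℓ)
    (h : U → κ) : ProperColoring (multipartiteEdges part) h ↔
      ∀ a b : U, part a ≠ part b → h a ≠ h b := by
  constructor
  · intro H a b hab
    obtain ⟨u, hu, v, hv, -, hne⟩ := H {a, b} ((aux_mem part _).2 ⟨a, b, hab, rfl⟩)
    simp only [Finset.mem_insert, Finset.mem_singleton] at hu hv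
    rcases hu with rfl | rfl <;> rcases hv with rfl | rfl
    · exact absurd rfl hne
    · exact hne
    · exact hne.symm
    · exact absurd rfl hne
  · intro H S hS
    obtain ⟨a, b, hab, rfl⟩ := (aux_mem part _).1 hS
    exact ⟨a, by simp, b, by simp, fun e => hab (by rw [e]), H a b hab⟩

theorem aux_nonneg {U : Type*} [Fintype U] (A : Multiset (Finset U))
    {N c : ℕ} (p : Fin c → ℝ) (hp : ∀ i, 0 ≤ p i) (h : U → Fin N) :
    0 ≤ imageColoringSum A p h := by
  unfold imageColoringSum
  refine Finset.sum_nonneg fun g _ => ?_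
  split_ifs
  · exact Finset.prod_nonneg fun v _ => hp _
  · exact le_rfl

theorem aux_le_one {U : Type*} [Fintype U] (A : Multiset (Finset U))
    {N c : ℕ} (p : Fin c → ℝ) (hp : ∀ i, 0 ≤ p i) (hs : ∑ i, p i = 1) (h : U → Fin N) :
    imageColoringSum A p h ≤ 1 := by
  unfold imageColoringSum
  calc _ ≤ ∑ g : {v : Fin N // v ∈ Finset.image h Finset.univ} → Fin c,
        ∏ v : {v : Fin N // v ∈ Finset.image h Finset.univ}, p (g v) := by
        refine Finset.sum_le_sum fun g _ => ?_
        split_ifs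
        · exact le_rfl
        · exact Finset.prod_nonneg fun v _ => hp _
    _ = ∏ v : {v : Fin N // v ∈ Finset.image h Finset.univ}, ∑ i, p i := by
        rw [Finset.prod_univ_sum, Fintype.piFinset_univ]
    _ = 1 := by simp [hs]

theorem aux_prod {U V : Type*} [Fintype U] [Fintype V] (q : U → V)
    (hq : Function.Surjective q) (f : V → ℝ) (h0 : ∀ v, 0 ≤ f v) (h1 : ∀ v, f v ≤ 1) :
    ∏ u, f (q u) ≤ ∏ v, f v := by
  rw [← Finset.prod_fiberwise (s := Finset.univ) (g := q) (f := fun u => f (q u))]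
  refine Finset.prod_le_prod (fun v _ => Finset.prod_nonneg fun u _ => h0 _) fun v _ => ?_
  have : ∏ u ∈ Finset.univ.filter (fun u => q u = v), f (q u)
      = f v ^ (Finset.univ.filter (fun u => q u = v)).card := by
    rw [Finset.prod_congr rfl (g := fun _ => f v), Finset.prod_const]
    intro u hu
    rw [(Finset.mem_filter.1 hu).2]
  rw [this]
  obtain ⟨u, hu⟩ := hq v
  refine pow_le_of_le_one (h0 v) (h1 v) (Finset.card_pos.2 ⟨u, by simp [hu]⟩).ne'

def auxPerm {ℓ : ℕ} (e : Equiv.Perm (Fin ℓ)) : Fin (ℓ + 1) → Fin (ℓ + 1) :=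
  Fin.cases 0 fun i => (e i).succ

theorem auxPerm_inj {ℓ : ℕ} (e : Equiv.Perm (Fin ℓ)) : Function.Injective (auxPerm e) := by
  intro a b
  induction a using Fin.cases <;> induction b using Fin.cases <;>
    simp [auxPerm, Fin.succ_ne_zero, (Fin.succ_ne_zero _).symm]

theorem aux_exp (k ℓ : ℕ) (hkℓ : ℓ < k) :
    1 / Real.exp 1 ^ ℓ ≤ (((k : ℝ) - (ℓ : ℝ)) / (k : ℝ)) ^ (k - ℓ) := by
  have hk : (0 : ℝ) < k := by exact_mod_cast (by omega : 0 < k)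
  have hd : (0 : ℝ) < (k : ℝ) - ℓ := by
    have : (ℓ : ℝ) < k := by exact_mod_cast hkℓ
    linarith
  have h1 : (k : ℝ) / ((k : ℝ) - ℓ) ≤ Real.exp (ℓ / ((k : ℝ) - ℓ)) := by
    have := Real.add_one_le_exp ((ℓ : ℝ) / ((k : ℝ) - ℓ))
    refine le_trans (le_of_eq ?_) this
    field_simp
    ring
  have h2 : ((k : ℝ) / ((k : ℝ) - ℓ)) ^ (k - ℓ) ≤ Real.exp 1 ^ ℓ := by
    calc _ ≤ Real.exp (ℓ / ((k : ℝ) - ℓ)) ^ (k - ℓ) := by gcongr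
      _ = Real.exp 1 ^ ℓ := by
        rw [← Real.exp_nat_mul, ← Real.exp_nat_mul, Nat.cast_sub hkℓ.le]
        congr 1
        field_simp
  have h3 : (((k : ℝ) - (ℓ : ℝ)) / (k : ℝ)) ^ (k - ℓ)
      = 1 / ((k : ℝ) / ((k : ℝ) - ℓ)) ^ (k - ℓ) := by
    rw [← one_div_div, div_pow, one_pow]
  rw [h3]
  exact one_div_le_one_div_of_le (by positivity) h2

theorem aux_main {U : Type*} [Fintype U] [DecidableEq U]
    (k ℓ : ℕ) (part : U → Fin (ℓ + 1)) (hk : ℓ < k)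
    (hpart0 : (Finset.univ.filter (fun u => part u = 0)).card = k - ℓ)
    (hpart1 : ∀ i : Fin (ℓ + 1), i ≠ 0 →
      (Finset.univ.filter (fun u => part u = i)).card = 1)
    (N : ℕ) (a b : ℝ) (ha : 0 ≤ a) (ha1 : a ≤ 1) (hb : 0 ≤ b) (hb1 : b ≤ 1)
    (h : U → Fin N) (hh : ∀ a b : U, part a ≠ part b → h a ≠ h b) :
    (ℓ.factorial : ℝ) * (a ^ (k - ℓ) * b ^ ℓ) ≤
      imageColoringSum (multipartiteEdges part) (Fin.cons a fun _ => b : Fin (ℓ + 1) → ℝ) h := by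
  set p : Fin (ℓ + 1) → ℝ := Fin.cons a fun _ => b with hp
  have hp0 : ∀ i, 0 ≤ p i := by
    intro i; induction i using Fin.cases <;> simp [hp, ha, hb]
  have hp1 : ∀ i, p i ≤ 1 := by
    intro i; induction i using Fin.cases <;> simp [hp, ha1, hb1]
  have hsurj : Function.Surjective part := by
    intro i
    have : 0 < (Finset.univ.filter (fun u => part u = i)).card := by
      by_cases hi : i = 0
      · subst hi; rw [hpart0]; omega
      · rw [hpart1 i hi]; exact one_pos
    obtain ⟨u, hu⟩ := Finset.card_pos.1 this
    exact ⟨u, (Finset.mem_filter.1 hu).2⟩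
  let q : U → {v : Fin N // v ∈ Finset.image h Finset.univ} := fun u =>
    ⟨h u, Finset.mem_image_of_mem h (Finset.mem_univ u)⟩
  have hq : Function.Surjective q := by
    rintro ⟨v, hv⟩
    obtain ⟨u, -, rfl⟩ := Finset.mem_image.1 hv
    exact ⟨u, rfl⟩
  have hq2 := hq
  choose r hr using hq2
  have hpr : ∀ u, part (r (q u)) = part u := by
    intro u
    by_contra hne
    exact hh _ _ hne (congrArg Subtype.val (hr (q u)))
  let G : Equiv.Perm (Fin ℓ) → ({v : Fin N // v ∈ Finset.image h Finset.univ} → Fin (ℓ + 1)) :=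
    fun e v => auxPerm e (part (r v))
  have hG : Function.Injective G := by
    intro e e' hee
    refine Equiv.ext fun i => ?_
    obtain ⟨u, hu⟩ := hsurj i.succ
    have := congrFun hee (q u)
    simp only [G, hpr, hu] at this
    simpa [auxPerm] using this
  have hweight : ∀ e, a ^ (k - ℓ) * b ^ ℓ ≤ ∏ v, p (G e v) := by
    intro e
    refine le_trans (le_of_eq ?_) (aux_prod q hq (fun v => p (G e v)) (fun _ => hp0 _) fun _ => hp1 _)
    have h1 : ∀ u, p (G e (q u)) = p (part u) := by
      intro u
      simp only [G, hpr]
      generalize part u = i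
      induction i using Fin.cases <;> simp [hp, auxPerm]
    simp only [h1]
    rw [← Finset.prod_fiberwise (s := Finset.univ) (g := part) (f := fun u => p (part u))]
    have h2 : ∀ i, ∏ u ∈ Finset.univ.filter (fun u => part u = i), p (part u)
        = p i ^ (Finset.univ.filter (fun u => part u = i)).card := by
      intro i
      rw [Finset.prod_congr rfl (g := fun _ => p i), Finset.prod_const]
      intro u hu
      rw [(Finset.mem_filter.1 hu).2]
    simp only [h2]
    rw [Fin.prod_univ_succ, hpart0]
    simp only [hpart1 _ (Fin.succ_ne_zero _)]
    simp [hp]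
  unfold imageColoringSum
  calc (ℓ.factorial : ℝ) * (a ^ (k - ℓ) * b ^ ℓ)
      = ∑ _e : Equiv.Perm (Fin ℓ), a ^ (k - ℓ) * b ^ ℓ := by
        simp [Fintype.card_perm]
    _ ≤ ∑ e : Equiv.Perm (Fin ℓ), ∏ v, p (G e v) := Finset.sum_le_sum fun e _ => hweight e
    _ = ∑ g ∈ Finset.univ.image G, ∏ v, p (g v) := by
        rw [Finset.sum_image hG.injOn]
    _ ≤ _ := by
        refine le_trans (le_of_eq ?_) (Finset.sum_le_sum_of_subset_of_nonneg
          (Finset.subset_univ (Finset.univ.image G)) fun g _ _ => ?_)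
        · refine Finset.sum_congr rfl fun g hg => ?_
          obtain ⟨e, -, rfl⟩ := Finset.mem_image.1 hg
          rw [if_pos]
          intro S hS
          obtain ⟨x, y, hxy, rfl⟩ := (aux_mem part _).1 hS
          refine ⟨x, by simp, y, by simp, ?_⟩
          change auxPerm e (part (r (q x))) ≠ auxPerm e (part (r (q y)))
          rw [hpr, hpr]
          exact fun he => hxy (auxPerm_inj e he)
        · split_ifs
          · exact Finset.prod_nonneg fun v _ => hp0 _
          · exact le_rfl

/-- For the complete `(ℓ+1)`-partite graph `K_{(k−ℓ,1,…,1)}` on `k` vertices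
(one part of size `k−ℓ`, indexed by `0`, and `ℓ` singleton parts), with `c = ℓ+1`
colors and any `N ≥ ℓ+1`:
`θ* ≥ (ℓ!/k^ℓ)·((k−ℓ)/k)^{k−ℓ} ≥ (ℓ!/e^ℓ)·(1/k^ℓ)`. -/
theorem thetaStar_star_like_bound
    {U : Type*} [Fintype U] [DecidableEq U]
    (k ℓ : ℕ) (hℓ : 1 ≤ ℓ) (hkℓ : ℓ < k) (hU : Fintype.card U = k)
    (part : U → Fin (ℓ + 1))
    (hpart0 : (Finset.univ.filter (fun u => part u = 0)).card = k - ℓ)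
    (hpart1 : ∀ i : Fin (ℓ + 1), i ≠ 0 →
      (Finset.univ.filter (fun u => part u = i)).card = 1)
    (N : ℕ) (hN : ℓ + 1 ≤ N) :
    ((ℓ.factorial : ℝ) / (k : ℝ) ^ ℓ) * (((k : ℝ) - (ℓ : ℝ)) / (k : ℝ)) ^ (k - ℓ) ≤
      thetaStar (multipartiteEdges part) N (ℓ + 1) ∧
    ((ℓ.factorial : ℝ) / Real.exp 1 ^ ℓ) * (1 / (k : ℝ) ^ ℓ) ≤
      ((ℓ.factorial : ℝ) / (k : ℝ) ^ ℓ) * (((k : ℝ) - (ℓ : ℝ)) / (k : ℝ)) ^ (k - ℓ) := by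
  have hk : (0 : ℝ) < k := by exact_mod_cast (by omega : 0 < k)
  have hl : (ℓ : ℝ) < k := by exact_mod_cast hkℓ
  constructor
  · have hne : ∀ p : Fin (ℓ + 1) → ℝ, {t : ℝ | ∃ h : U → Fin N,
        ProperColoring (multipartiteEdges part) h ∧
          imageColoringSum (multipartiteEdges part) p h = t}.Nonempty := by
      intro p
      refine ⟨_, fun u => Fin.castLE hN (part u), ?_, rfl⟩
      rw [aux_proper]
      intro a b hab he
      exact hab (Fin.castLE_injective hN he)
    have ha : 0 ≤ ((k : ℝ) - ℓ) / k := div_nonneg (by linarith) hk.le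
    have ha1 : ((k : ℝ) - ℓ) / k ≤ 1 := by
      rw [div_le_one hk]
      have : (0 : ℝ) ≤ ℓ := Nat.cast_nonneg _
      linarith
    have hb : 0 ≤ 1 / (k : ℝ) := by positivity
    have hb1 : 1 / (k : ℝ) ≤ 1 := by
      rw [div_le_one hk]
      exact_mod_cast (by omega : 1 ≤ k)
    refine le_csSup_of_le ?_
      ⟨(Fin.cons (((k : ℝ) - ℓ) / k) fun _ => 1 / (k : ℝ) : Fin (ℓ + 1) → ℝ), ?_, ?_, rfl⟩ ?_
    · refine ⟨1, ?_⟩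
      rintro t ⟨p, hp, hs, rfl⟩
      obtain ⟨t, h, hh, rfl⟩ := hne p
      refine csInf_le_of_le ⟨0, ?_⟩ ⟨h, hh, rfl⟩ (aux_le_one _ p hp hs h)
      rintro t ⟨h, -, rfl⟩
      exact aux_nonneg _ p hp h
    · intro i
      induction i using Fin.cases
      · simpa using ha
      · simp
    · rw [Fin.sum_univ_succ]
      simp
      field_simp
      ring
    · refine le_csInf (hne _) ?_
      rintro t ⟨h, hh, rfl⟩
      refine le_trans (le_of_eq ?_) (aux_main k ℓ part hkℓ (by convert hpart0)
        (by intro i hi; convert hpart1 i hi) N _ _ ha ha1 hb hb1 h ((aux_proper part h).1 hh))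
      rw [one_div, inv_pow]
      ring
  · have h := aux_exp k ℓ hkℓ
    calc ((ℓ.factorial : ℝ) / Real.exp 1 ^ ℓ) * (1 / (k : ℝ) ^ ℓ)
        = ((ℓ.factorial : ℝ) / (k : ℝ) ^ ℓ) * (1 / Real.exp 1 ^ ℓ) := by ring
      _ ≤ _ := mul_le_mul_of_nonneg_left h (by positivity)
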